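/- Let n^m, n^{m−1}, p^m, p^{m−1} be pointwise-positive periodic grid functions such that n^m − p^m and n^{m−1} − p^{m−1} have zero mean, and let (n^{m+1}, p^{m+1}) be a pointwise-positive solution of the scheme with n^{m+1} − p^{m+1} of zero mean. Then the total masses are conserved: Σ_{i,j,k} n^{m+1}(i,j,k) = Σ_{i,j,k} n^m(i,j,k) and Σ_{i,j,k} p^{m+1}(i,j,k) = Σ_{i,j,k} p^m(i,j,k). -/

import Mathlib

open scoped BigOperators

/-- The periodic grid of indices: `(ZMod N)^3`. -/
abbrev GridIdx (N : ℕ) := ZMod N × ZMod N × ZMod N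

namespace PNP

/-- Shift the first index by `a`. -/
def xsh {N : ℕ} (p : GridIdx N) (a : ZMod N) : GridIdx N := (p.1 + a, p.2.1, p.2.2)
/-- Shift the second index by `a`. -/
def ysh {N : ℕ} (p : GridIdx N) (a : ZMod N) : GridIdx N := (p.1, p.2.1 + a, p.2.2)
/-- Shift the third index by `a`. -/
def zsh {N : ℕ} (p : GridIdx N) (a : ZMod N) : GridIdx N := (p.1, p.2.1, p.2.2 + a)

/-- Forward difference in `x`: `(D_x f)(p) = (f(p + e_x) - f(p)) / h` with `h = 1/N`. -/
noncomputable def Dx (N : ℕ) (f : GridIdx N → ℝ) : GridIdx N → ℝ :=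
  fun p => (f (xsh p 1) - f p) * N
/-- Forward difference in `y`. -/
noncomputable def Dy (N : ℕ) (f : GridIdx N → ℝ) : GridIdx N → ℝ :=
  fun p => (f (ysh p 1) - f p) * N
/-- Forward difference in `z`. -/
noncomputable def Dz (N : ℕ) (f : GridIdx N → ℝ) : GridIdx N → ℝ :=
  fun p => (f (zsh p 1) - f p) * N

/-- Backward difference in `x`: `(d_x f)(p) = (f(p) - f(p - e_x)) / h`. -/
noncomputable def dxm (N : ℕ) (f : GridIdx N → ℝ) : GridIdx N → ℝ :=
  fun p => (f p - f (xsh p (-1))) * N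
/-- Backward difference in `y`. -/
noncomputable def dym (N : ℕ) (f : GridIdx N → ℝ) : GridIdx N → ℝ :=
  fun p => (f p - f (ysh p (-1))) * N
/-- Backward difference in `z`. -/
noncomputable def dzm (N : ℕ) (f : GridIdx N → ℝ) : GridIdx N → ℝ :=
  fun p => (f p - f (zsh p (-1))) * N

/-- Forward average in `x`: `(A_x f)(p) = (f(p + e_x) + f(p)) / 2`. -/
noncomputable def Ax (N : ℕ) (f : GridIdx N → ℝ) : GridIdx N → ℝ :=
  fun p => (f (xsh p 1) + f p) / 2
/-- Forward average in `y`. -/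
noncomputable def Ay (N : ℕ) (f : GridIdx N → ℝ) : GridIdx N → ℝ :=
  fun p => (f (ysh p 1) + f p) / 2
/-- Forward average in `z`. -/
noncomputable def Az (N : ℕ) (f : GridIdx N → ℝ) : GridIdx N → ℝ :=
  fun p => (f (zsh p 1) + f p) / 2

/-- The discrete Laplacian `Δ_h f = d_x(D_x f) + d_y(D_y f) + d_z(D_z f)`. -/
noncomputable def lap (N : ℕ) (f : GridIdx N → ℝ) : GridIdx N → ℝ :=
  fun p => dxm N (Dx N f) p + dym N (Dy N f) p + dzm N (Dz N f) p

/-- The discrete inner product `⟨f, g⟩ = h³ ∑ f·g` with `h = 1/N`. -/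
noncomputable def ip (N : ℕ) [NeZero N] (f g : GridIdx N → ℝ) : ℝ :=
  ((1 : ℝ) / N) ^ 3 * ∑ p : GridIdx N, f p * g p

/-- The discrete `L²` norm `‖f‖₂ = ⟨f, f⟩^{1/2}`. -/
noncomputable def l2 (N : ℕ) [NeZero N] (f : GridIdx N → ℝ) : ℝ :=
  Real.sqrt (ip N f f)

/-- The discrete maximum norm `‖f‖_∞ = max |f|`. -/
noncomputable def linf (N : ℕ) [NeZero N] (f : GridIdx N → ℝ) : ℝ :=
  ⨆ p : GridIdx N, |f p|

/-- A grid function has zero mean if its values sum to zero. -/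
def zeroMean (N : ℕ) [NeZero N] (f : GridIdx N → ℝ) : Prop :=
  ∑ p : GridIdx N, f p = 0

/-- With `F(x) = x·ln x`, the difference quotient `G¹_a(x) = (F(x) - F(a))/(x - a)`
for `x ≠ a`, with value `F'(a) = ln a + 1` at `x = a`. -/
noncomputable def G1 (a x : ℝ) : ℝ :=
  if x = a then Real.log a + 1
  else (x * Real.log x - a * Real.log a) / (x - a)

end PNP

open PNP

namespace PNP

/-- Regularized face mobility (in `x`) built from the extrapolation `(3/2)a - (1/2)b`:
`((A_x((3/2)a - (1/2)b))² + Δt⁶)^{1/2}`. -/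
noncomputable def mobX (N : ℕ) (dt : ℝ) (a b : GridIdx N → ℝ) : GridIdx N → ℝ :=
  fun p => Real.sqrt ((Ax N (fun q => (3/2) * a q - (1/2) * b q) p) ^ 2 + dt ^ 6)
/-- Regularized face mobility (in `y`). -/
noncomputable def mobY (N : ℕ) (dt : ℝ) (a b : GridIdx N → ℝ) : GridIdx N → ℝ :=
  fun p => Real.sqrt ((Ay N (fun q => (3/2) * a q - (1/2) * b q) p) ^ 2 + dt ^ 6)
/-- Regularized face mobility (in `z`). -/
noncomputable def mobZ (N : ℕ) (dt : ℝ) (a b : GridIdx N → ℝ) : GridIdx N → ℝ :=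
  fun p => Real.sqrt ((Az N (fun q => (3/2) * a q - (1/2) * b q) p) ^ 2 + dt ^ 6)

/-- The pair `(n1, p1)` solves the second-order scheme with data
`n0, nm1, p0, pm1`, with the chemical potentials `μn, μp`. -/
def SolvesSchemeWith (N : ℕ) [NeZero N] (dt Dc : ℝ)
    (n0 nm1 p0 pm1 n1 p1 μn μp : GridIdx N → ℝ) : Prop :=
  ∃ φn φp : GridIdx N → ℝ,
    zeroMean N φn ∧
    (∀ q, -lap N φn q = (n1 q + n0 q) / 2 - (p1 q + p0 q) / 2) ∧
    zeroMean N φp ∧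
    (∀ q, -lap N φp q = (p1 q + p0 q) / 2 - (n1 q + n0 q) / 2) ∧
    (∀ q, μn q = G1 (n0 q) (n1 q) - 1
      + dt * (Real.log (n1 q) - Real.log (n0 q)) + φn q) ∧
    (∀ q, μp q = G1 (p0 q) (p1 q) - 1
      + dt * (Real.log (p1 q) - Real.log (p0 q)) + φp q) ∧
    (∀ q, (n1 q - n0 q) / dt =
      dxm N (fun r => mobX N dt n0 nm1 r * Dx N μn r) q +
      dym N (fun r => mobY N dt n0 nm1 r * Dy N μn r) q +
      dzm N (fun r => mobZ N dt n0 nm1 r * Dz N μn r) q) ∧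
    (∀ q, (p1 q - p0 q) / dt =
      dxm N (fun r => mobX N dt (fun s => Dc * p0 s) (fun s => Dc * pm1 s) r * Dx N μp r) q +
      dym N (fun r => mobY N dt (fun s => Dc * p0 s) (fun s => Dc * pm1 s) r * Dy N μp r) q +
      dzm N (fun r => mobZ N dt (fun s => Dc * p0 s) (fun s => Dc * pm1 s) r * Dz N μp r) q)

/-- The pair `(n1, p1)` solves the second-order scheme, for some chemical potentials. -/
def SolvesScheme (N : ℕ) [NeZero N] (dt Dc : ℝ)
    (n0 nm1 p0 pm1 n1 p1 : GridIdx N → ℝ) : Prop :=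
  ∃ μn μp : GridIdx N → ℝ, SolvesSchemeWith N dt Dc n0 nm1 p0 pm1 n1 p1 μn μp

end PNP

theorem sum_sub_comp_add_right {G M : Type*} [AddGroup G] [Fintype G] [AddCommGroup M]
    (f : G → M) (a : G) : ∑ x, (f x - f (x + a)) = 0 := by
  have sum_translate : ∑ x, f (x + a) = ∑ x, f x := Equiv.sum_comp (Equiv.addRight a) f
  rw [Finset.sum_sub_distrib, sum_translate, sub_self]

namespace PNP

section Shift

variable {N : ℕ} (q : GridIdx N) (a : ZMod N)

theorem xsh_eq_add : xsh q a = q + (a, 0, 0) := by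
  simp [xsh, Prod.ext_iff]

theorem ysh_eq_add : ysh q a = q + (0, a, 0) := by
  simp [ysh, Prod.ext_iff]

theorem zsh_eq_add : zsh q a = q + (0, 0, a) := by
  simp [zsh, Prod.ext_iff]

end Shift

/-- The discrete divergence `∇_h · (f, g, k) = d_x f + d_y g + d_z k` of a flux given by its
values on the faces of the grid, face `i + 1/2` being indexed by `i`. The right-hand sides of the
scheme are of this form. -/
noncomputable def divh (N : ℕ) (f g k : GridIdx N → ℝ) : GridIdx N → ℝ :=
  fun q => dxm N f q + dym N g q + dzm N k q

section Sum

variable {N : ℕ} [NeZero N]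

theorem sum_dxm (f : GridIdx N → ℝ) : ∑ q, dxm N f q = 0 := by
  simp only [dxm, xsh_eq_add, ← Finset.sum_mul, sum_sub_comp_add_right, zero_mul]

theorem sum_dym (f : GridIdx N → ℝ) : ∑ q, dym N f q = 0 := by
  simp only [dym, ysh_eq_add, ← Finset.sum_mul, sum_sub_comp_add_right, zero_mul]

theorem sum_dzm (f : GridIdx N → ℝ) : ∑ q, dzm N f q = 0 := by
  simp only [dzm, zsh_eq_add, ← Finset.sum_mul, sum_sub_comp_add_right, zero_mul]

theorem sum_divh (f g k : GridIdx N → ℝ) : ∑ q, divh N f g k q = 0 := by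
  simp only [divh, Finset.sum_add_distrib, sum_dxm, sum_dym, sum_dzm, add_zero]

end Sum

end PNP

theorem stmt11_general {N : ℕ} [NeZero N] {dt : ℝ} (hdt : dt ≠ 0)
    {u v f g k : GridIdx N → ℝ} (huv : ∀ q, (u q - v q) / dt = divh N f g k q) :
    ∑ q, u q = ∑ q, v q := by
  have increment_eq (q : GridIdx N) : u q - v q = divh N f g k q * dt :=
    (div_eq_iff hdt).mp (huv q)
  rw [← sub_eq_zero, ← Finset.sum_sub_distrib]
  simp only [increment_eq, ← Finset.sum_mul, sum_divh, zero_mul]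

/-- Mass conservation for the scheme. -/
theorem stmt11 (N : ℕ) [NeZero N] (dt Dc : ℝ) (hdt : 0 < dt) (hD : 0 < Dc)
    (n0 nm1 p0 pm1 n1 p1 : GridIdx N → ℝ)
    (hn0 : ∀ q, 0 < n0 q) (hnm1 : ∀ q, 0 < nm1 q)
    (hp0 : ∀ q, 0 < p0 q) (hpm1 : ∀ q, 0 < pm1 q)
    (hn1 : ∀ q, 0 < n1 q) (hp1 : ∀ q, 0 < p1 q)
    (hzm0 : zeroMean N (fun q => n0 q - p0 q))
    (hzm1 : zeroMean N (fun q => nm1 q - pm1 q))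
    (hzm2 : zeroMean N (fun q => n1 q - p1 q))
    (hsol : SolvesScheme N dt Dc n0 nm1 p0 pm1 n1 p1) :
    (∑ q : GridIdx N, n1 q) = (∑ q : GridIdx N, n0 q) ∧
    (∑ q : GridIdx N, p1 q) = (∑ q : GridIdx N, p0 q) := by
  obtain ⟨_, _, _, _, -, -, -, -, -, -, hn, hp⟩ := hsol
  exact ⟨stmt11_general hdt.ne' hn, stmt11_general hdt.ne' hp⟩
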